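/- arXiv:2207.13609 — 2 statements merged into one kernel-verified Lean document; each statement's English description precedes it below -/
import Mathlib

section
/- Let ρ ∈ (0,1) and θ > 0. The tempered Γ-grey density l^θ_ρ is a probability density, i.e. l^θ_ρ ≥ 0 and ∫_1^∞ e^{-θy}/(Γ(ρ,θ) Γ(1-ρ) y (y-1)^ρ) dy = 1. -/
open MeasureTheory Real Set

/-- Upper incomplete gamma function `Γ(ρ, x) = ∫_x^∞ e^{-w} w^{ρ-1} dw`. -/
noncomputable def uGamma (ρ x : ℝ) : ℝ := ∫ w in Set.Ioi x, Real.exp (-w) * w ^ (ρ - 1)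

/-- The tempered Γ-grey density `l^θ_ρ`. -/
noncomputable def lDens (ρ θ y : ℝ) : ℝ :=
  if 1 < y then Real.exp (-θ * y) / (uGamma ρ θ * Real.Gamma (1 - ρ) * y * (y - 1) ^ ρ) else 0

/-!
Integrate `(y - 1)^(-ρ) e^{-sy}` over `y > 1` and `s > θ` in both orders. Integrating in `s` first
gives `(y - 1)^(-ρ) e^{-θy} / y`, the density up to its constant; integrating in `y` first gives
`Γ(1-ρ) e^{-s} s^{ρ-1}`, whose integral over `s > θ` is `Γ(1-ρ) Γ(ρ,θ)`.
-/

theorem setIntegral_Ioi_comp_sub_right {E : Type*} [NormedAddCommGroup E] [NormedSpace ℝ E]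
    (f : ℝ → E) (a c : ℝ) :
    ∫ y in Ioi (a + c), f (y - c) = ∫ x in Ioi a, f x := by
  rw [← preimage_sub_const_Ioi]
  exact (measurePreserving_sub_right volume c).setIntegral_preimage_emb
    (MeasurableEquiv.subRight c).measurableEmbedding f (Ioi a)

theorem integral_sub_rpow_mul_exp_neg_mul_Ioi {a s : ℝ} (ha : 0 < a) (hs : 0 < s) (c : ℝ) :
    ∫ y in Ioi c, (y - c) ^ (a - 1) * exp (-(s * y)) = exp (-(s * c)) * ((1 / s) ^ a * Gamma a) :=
  calc ∫ y in Ioi c, (y - c) ^ (a - 1) * exp (-(s * y))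
      = ∫ y in Ioi (0 + c), exp (-(s * c)) * ((y - c) ^ (a - 1) * exp (-(s * (y - c)))) := by
        rw [zero_add]
        congr! 2 with y
        rw [mul_left_comm, ← exp_add]
        ring_nf
    _ = ∫ x in Ioi 0, exp (-(s * c)) * (x ^ (a - 1) * exp (-(s * x))) :=
        setIntegral_Ioi_comp_sub_right
          (fun x ↦ exp (-(s * c)) * (x ^ (a - 1) * exp (-(s * x)))) 0 c
    _ = exp (-(s * c)) * ((1 / s) ^ a * Gamma a) := by
        rw [integral_const_mul, integral_rpow_mul_exp_neg_mul_Ioi ha hs]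

theorem integral_exp_neg_mul_Ioi {y : ℝ} (hy : 0 < y) (θ : ℝ) :
    ∫ s in Ioi θ, exp (-(s * y)) = exp (-(θ * y)) / y := by
  simpa only [neg_mul, mul_comm y, neg_div_neg_eq] using integral_exp_mul_Ioi (neg_lt_zero.2 hy) θ

section UpperIncompleteGamma

variable {ρ θ : ℝ}

theorem integrableOn_exp_neg_mul_rpow_Ioi (hθ : 0 ≤ θ) (h : 0 < θ ∨ 0 < ρ) :
    IntegrableOn (fun w : ℝ ↦ exp (-w) * w ^ (ρ - 1)) (Ioi θ) := by
  rcases h with hθ_pos | hρ_pos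
  · have hcont : ContinuousOn (fun w : ℝ ↦ exp (-w) * w ^ (ρ - 1)) (Ici θ) :=
      continuousOn_id.neg.rexp.mul <|
        continuousOn_id.rpow_const fun w hw ↦ .inl (hθ_pos.trans_le hw).ne'
    exact integrable_of_isBigO_exp_neg one_half_pos hcont (Gamma_integrand_isLittleO _).isBigO
  · exact (GammaIntegral_convergent hρ_pos).mono_set (Ioi_subset_Ioi hθ)

theorem exp_neg_mul_rpow_pos_of_mem_Ioi (hθ : 0 ≤ θ) {w : ℝ} (hw : w ∈ Ioi θ) :
    0 < exp (-w) * w ^ (ρ - 1) :=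
  mul_pos (exp_pos _) (rpow_pos_of_pos (hθ.trans_lt hw) _)

theorem uGamma_nonneg (hθ : 0 ≤ θ) : 0 ≤ uGamma ρ θ :=
  setIntegral_nonneg measurableSet_Ioi fun _ hw ↦ (exp_neg_mul_rpow_pos_of_mem_Ioi hθ hw).le

theorem uGamma_pos (hθ : 0 ≤ θ) (h : 0 < θ ∨ 0 < ρ) : 0 < uGamma ρ θ := by
  have hnonneg : 0 ≤ᵐ[volume.restrict (Ioi θ)] fun w : ℝ ↦ exp (-w) * w ^ (ρ - 1) :=
    ae_restrict_of_forall_mem measurableSet_Ioi fun _ hw ↦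
      (exp_neg_mul_rpow_pos_of_mem_Ioi hθ hw).le
  have hsupport : Ioi θ ⊆ Function.support fun w : ℝ ↦ exp (-w) * w ^ (ρ - 1) :=
    fun _ hw ↦ (exp_neg_mul_rpow_pos_of_mem_Ioi hθ hw).ne'
  rw [uGamma, setIntegral_pos_iff_support_of_nonneg_ae hnonneg
    (integrableOn_exp_neg_mul_rpow_Ioi hθ h), inter_eq_right.2 hsupport, volume_Ioi]
  exact ENNReal.zero_lt_top

end UpperIncompleteGamma

section GreyDensity

variable {ρ θ : ℝ}

theorem integral_sub_one_rpow_neg_mul_exp_neg_mul {s : ℝ} (hρ : ρ < 1) (hs : 0 < s) :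
    ∫ y in Ioi 1, (y - 1) ^ (-ρ) * exp (-(s * y)) = Gamma (1 - ρ) * (exp (-s) * s ^ (ρ - 1)) := by
  have h := integral_sub_rpow_mul_exp_neg_mul_Ioi (sub_pos.2 hρ) hs 1
  rw [sub_sub_cancel_left, mul_one, one_div, inv_rpow hs.le, ← rpow_neg hs.le, neg_sub] at h
  rw [h]
  ring

theorem integrable_uncurry_sub_one_rpow_neg_mul_exp_neg_mul (hρ : ρ < 1) (hθ : 0 ≤ θ)
    (h : 0 < θ ∨ 0 < ρ) :
    Integrable (Function.uncurry fun y s : ℝ ↦ (y - 1) ^ (-ρ) * exp (-(s * y)))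
      ((volume.restrict (Ioi 1)).prod (volume.restrict (Ioi θ))) := by
  have hΓ : 0 < Gamma (1 - ρ) := Gamma_pos_of_pos (sub_pos.2 hρ)
  have hmeas : Measurable (Function.uncurry fun y s : ℝ ↦ (y - 1) ^ (-ρ) * exp (-(s * y))) := by
    unfold Function.uncurry
    fun_prop
  rw [integrable_prod_iff' hmeas.aestronglyMeasurable]
  constructor
  · filter_upwards [ae_restrict_mem measurableSet_Ioi] with s hs
    refine .of_integral_ne_zero ?_
    simp only [Function.uncurry_apply_pair]
    rw [integral_sub_one_rpow_neg_mul_exp_neg_mul hρ (hθ.trans_lt hs)]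
    exact (mul_pos hΓ (exp_neg_mul_rpow_pos_of_mem_Ioi hθ hs)).ne'
  · refine ((integrableOn_exp_neg_mul_rpow_Ioi hθ h).const_mul (Gamma (1 - ρ))).congr ?_
    filter_upwards [ae_restrict_mem measurableSet_Ioi] with s hs
    rw [← integral_sub_one_rpow_neg_mul_exp_neg_mul hρ (hθ.trans_lt hs)]
    refine setIntegral_congr_fun measurableSet_Ioi fun y hy ↦ (norm_of_nonneg ?_).symm
    exact mul_nonneg (rpow_nonneg (sub_pos.2 hy).le _) (exp_pos _).le

theorem integral_sub_one_rpow_neg_mul_exp_neg_mul_div (hρ : ρ < 1) (hθ : 0 ≤ θ)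
    (h : 0 < θ ∨ 0 < ρ) :
    ∫ y in Ioi 1, (y - 1) ^ (-ρ) * (exp (-(θ * y)) / y) = Gamma (1 - ρ) * uGamma ρ θ :=
  calc ∫ y in Ioi 1, (y - 1) ^ (-ρ) * (exp (-(θ * y)) / y)
      = ∫ y in Ioi 1, ∫ s in Ioi θ, (y - 1) ^ (-ρ) * exp (-(s * y)) :=
        setIntegral_congr_fun measurableSet_Ioi fun y hy ↦ by
          rw [integral_const_mul, integral_exp_neg_mul_Ioi (one_pos.trans hy)]
    _ = ∫ s in Ioi θ, ∫ y in Ioi 1, (y - 1) ^ (-ρ) * exp (-(s * y)) :=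
        integral_integral_swap (integrable_uncurry_sub_one_rpow_neg_mul_exp_neg_mul hρ hθ h)
    _ = ∫ s in Ioi θ, Gamma (1 - ρ) * (exp (-s) * s ^ (ρ - 1)) :=
        setIntegral_congr_fun measurableSet_Ioi fun s hs ↦
          integral_sub_one_rpow_neg_mul_exp_neg_mul hρ (hθ.trans_lt hs)
    _ = Gamma (1 - ρ) * uGamma ρ θ := integral_const_mul _ _

theorem lDens_nonneg (hρ : ρ < 1) (hθ : 0 ≤ θ) (y : ℝ) : 0 ≤ lDens ρ θ y := by
  unfold lDens
  split_ifs with hy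
  · have hconst : 0 ≤ uGamma ρ θ * Gamma (1 - ρ) :=
      mul_nonneg (uGamma_nonneg hθ) (Gamma_pos_of_pos (sub_pos.2 hρ)).le
    exact div_nonneg (exp_pos _).le <|
      mul_nonneg (mul_nonneg hconst (one_pos.trans hy).le) (rpow_nonneg (sub_pos.2 hy).le _)
  · exact le_rfl

/-- The case `θ = 0`, `0 < ρ` is the untempered Γ-grey density. -/
theorem stmt_1_general (hρ : ρ < 1) (hθ : 0 ≤ θ) (h : 0 < θ ∨ 0 < ρ) :
    (∀ y : ℝ, 0 ≤ lDens ρ θ y) ∧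
    ∫ y in Ioi (1 : ℝ),
      exp (-θ * y) / (uGamma ρ θ * Gamma (1 - ρ) * y * (y - 1) ^ ρ) = 1 := by
  refine ⟨lDens_nonneg hρ hθ, ?_⟩
  have hu : 0 < uGamma ρ θ := uGamma_pos hθ h
  have hΓ : 0 < Gamma (1 - ρ) := Gamma_pos_of_pos (sub_pos.2 hρ)
  calc ∫ y in Ioi (1 : ℝ), exp (-θ * y) / (uGamma ρ θ * Gamma (1 - ρ) * y * (y - 1) ^ ρ)
      = ∫ y in Ioi (1 : ℝ), (Gamma (1 - ρ) * uGamma ρ θ)⁻¹ *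
          ((y - 1) ^ (-ρ) * (exp (-(θ * y)) / y)) := by
        refine setIntegral_congr_fun measurableSet_Ioi fun y hy ↦ ?_
        simp only [rpow_neg (sub_pos.2 hy).le, neg_mul]
        ring
    _ = (Gamma (1 - ρ) * uGamma ρ θ)⁻¹ * (Gamma (1 - ρ) * uGamma ρ θ) := by
        rw [integral_const_mul, integral_sub_one_rpow_neg_mul_exp_neg_mul_div hρ hθ h]
    _ = 1 := inv_mul_cancel₀ (mul_pos hΓ hu).ne'

end GreyDensity

theorem stmt_1 (ρ θ : ℝ) (hρ : ρ ∈ Set.Ioo (0 : ℝ) 1) (hθ : 0 < θ) :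
    (∀ y : ℝ, 0 ≤ lDens ρ θ y) ∧
    (∫ y in Set.Ioi (1 : ℝ),
        Real.exp (-θ * y) / (uGamma ρ θ * Real.Gamma (1 - ρ) * y * (y - 1) ^ ρ) = 1) :=
  stmt_1_general hρ.2 hθ.le (.inl hθ)
end

section
/- Let ρ ∈ (0,1], θ > 0, and let ν be a one-dimensional Γ-grey measure with parameters ρ, θ. Then ν has finite absolute moments of every order; every odd moment vanishes, ∫_ℝ x^{2n+1} dν(x) = 0 for all n ∈ ℕ; and for every integer n ≥ 1, ∫_ℝ x^{2n} dν(x) = (-1)^{n+1} · (2n)! · Γ(ρ) · θ^{ρ-n} · E^ρ_{1,ρ+1-n}(-θ) / (n! · 2^n · Γ(ρ,θ)). -/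
open MeasureTheory Real Set

/-- Three-parameter (Prabhakar) Mittag-Leffler function `E^γ_{α,β}(z)`. -/
noncomputable def prabhakar (α β γ z : ℝ) : ℝ :=
  ∑' j : ℕ, (Real.Gamma (γ + j) / Real.Gamma γ) * z ^ j
      / ((j.factorial : ℝ) * Real.Gamma (α * j + β))

/-!
By Fatou's lemma applied to `(sin (t x) / t) ^ 2`, a characteristic function `φ` that is `C²` at the
origin has a finite second moment. The measure `x ^ 2 μ` has characteristic function minus the
second derivative of `φ`, so smoothness at the origin gives finite moments of all orders. If
`φ ξ = F (θ + ξ ^ 2 / 2)`, evenness kills the odd moments, and comparing derivatives at `0`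
expresses the even ones through `F⁽ⁿ⁾ θ`. Here `F` is a multiple of `Γ(ρ, ·)`, whose derivative is
`-x ^ (ρ - 1) * e ^ (-x)`; the Leibniz rule for its higher derivatives, resummed with the
Chu–Vandermonde identity, is the Prabhakar series.
-/

open Filter Asymptotics Topology
open scoped ContDiff Nat

lemma isBigO_sub_sq_of_deriv_eq_zero {E : Type*} [NormedAddCommGroup E] [NormedSpace ℝ E]
    {f : ℝ → E} {a : ℝ} (hf : ContDiffAt ℝ 2 f a) (ha : deriv f a = 0) :
    (fun t => f t - f a) =O[𝓝 a] fun t => (t - a) ^ 2 := by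
  have deriv_diff : DifferentiableAt ℝ (deriv f) a :=
    (hf.derivWithin (m := 1) one_add_one_eq_two.le).differentiableAt one_ne_zero
  obtain ⟨C, hC⟩ := deriv_diff.isBigO_sub.bound
  have f_diff : ∀ᶠ t in 𝓝 a, DifferentiableAt ℝ f t :=
    (hf.eventually (by simp)).mono fun t ht => ht.differentiableAt two_ne_zero
  obtain ⟨ε, ε_pos, hε⟩ := Metric.eventually_nhds_iff_ball.1 (hC.and f_diff)
  refine IsBigO.of_bound |C| ?_
  filter_upwards [Metric.ball_mem_nhds a ε_pos] with t ht
  have segment_subset : Metric.closedBall a |t - a| ⊆ Metric.ball a ε :=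
    Metric.closedBall_subset_ball ht
  have deriv_bound : ∀ s ∈ Metric.closedBall a |t - a|, ‖deriv f s‖ ≤ |C| * |t - a| := by
    intro s hs
    calc ‖deriv f s‖ = ‖deriv f s - deriv f a‖ := by rw [ha, sub_zero]
      _ ≤ C * |s - a| := (hε s (segment_subset hs)).1
      _ ≤ |C| * |t - a| := mul_le_mul (le_abs_self C) hs (abs_nonneg _) (abs_nonneg _)
  calc ‖f t - f a‖ ≤ |C| * |t - a| * ‖t - a‖ :=
        (convex_closedBall a _).norm_image_sub_le_of_norm_deriv_le
          (fun s hs => (hε s (segment_subset hs)).2) deriv_bound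
          (Metric.mem_closedBall_self (abs_nonneg _)) (Metric.mem_closedBall.2 le_rfl)
    _ = |C| * ‖(t - a) ^ 2‖ := by rw [norm_pow, Real.norm_eq_abs, mul_assoc, sq]

lemma deriv_zero_of_even {E : Type*} [NormedAddCommGroup E] [NormedSpace ℝ E] {f : ℝ → E}
    (hf : Function.Even f) : deriv f 0 = 0 := by
  have deriv_eq_neg : deriv f 0 = -deriv f 0 := by
    simpa [funext hf] using deriv_comp_neg f 0
  have : IsAddTorsionFree E := .of_isTorsionFree ℝ E
  exact self_eq_neg.1 deriv_eq_neg

lemma integral_eq_zero_of_odd {G E : Type*} [MeasurableSpace G] [AddGroup G] [MeasurableNeg G]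
    [NormedAddCommGroup E] [NormedSpace ℝ E] (μ : Measure G) [μ.IsNegInvariant] {f : G → E}
    (hf : Function.Odd f) : ∫ x, f x ∂μ = 0 := by
  have integral_eq_neg : ∫ x, f x ∂μ = -∫ x, f x ∂μ := by
    rw [← integral_neg, ← integral_neg_eq_self f μ]
    exact integral_congr_ae (.of_forall hf)
  have : IsAddTorsionFree E := .of_isTorsionFree ℝ E
  exact self_eq_neg.1 integral_eq_neg

section Moments

variable {μ : Measure ℝ}

lemma memLp_id_of_integrable_pow {m : ℕ} (hm : m ≠ 0) (h : Integrable (fun x => x ^ m) μ) :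
    MemLp id m μ := by
  rw [← integrable_norm_rpow_iff (by fun_prop) (by simpa using hm) (by simp)]
  simpa using h.norm

variable [IsFiniteMeasure μ]

lemma re_charFun (t : ℝ) : (charFun μ t).re = ∫ x, cos (t * x) ∂μ := by
  have int : Integrable (fun x : ℝ => Complex.exp (t * x * Complex.I)) μ :=
    .of_bound (by fun_prop) 1 (.of_forall fun x => by
      rw [← Complex.ofReal_mul, Complex.norm_exp_ofReal_mul_I])
  rw [charFun_apply_real, ← RCLike.re_eq_complex_re, ← integral_re int]
  simp only [RCLike.re_eq_complex_re, ← Complex.ofReal_mul, Complex.exp_ofReal_mul_I_re]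

lemma integral_sin_mul_sq (t : ℝ) :
    ∫ x, sin (t * x) ^ 2 ∂μ = ((charFun μ 0).re - (charFun μ (2 * t)).re) / 2 := by
  have cos_int (s : ℝ) : Integrable (fun x => cos (s * x)) μ :=
    .of_bound (by fun_prop) 1 (.of_forall fun x => abs_cos_le_one _)
  rw [re_charFun, re_charFun, ← integral_sub (cos_int _) (cos_int _), ← integral_div]
  refine integral_congr_ae (.of_forall fun x => ?_)
  simp only [sin_sq_eq_half_sub, zero_mul, cos_zero, mul_assoc]
  ring

lemma isBigO_integral_sin_mul_sq (h : ContDiffAt ℝ 2 (charFun μ) 0) :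
    (fun t => ∫ x, sin (t * x) ^ 2 ∂μ) =O[𝓝 0] fun t => t ^ 2 := by
  have re_smooth : ContDiffAt ℝ 2 (fun t => (charFun μ t).re) 0 :=
    Complex.reCLM.contDiff.contDiffAt.comp 0 h
  have re_even : Function.Even fun t => (charFun μ t).re := fun t => by
    simp only [charFun_neg, Complex.conj_re]
  have quadratic := isBigO_sub_sq_of_deriv_eq_zero re_smooth (deriv_zero_of_even re_even)
  have two_mul_tendsto : Tendsto (fun t : ℝ => 2 * t) (𝓝 0) (𝓝 0) := by
    simpa using (continuous_const_mul (2 : ℝ)).tendsto 0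
  refine ((quadratic.comp_tendsto two_mul_tendsto).const_mul_left (-1 / 2)).trans ?_ |>.congr_left
    fun t => ?_
  · simpa [Function.comp_def, mul_pow] using
      (isBigO_refl (fun t : ℝ => t ^ 2) (𝓝 0)).const_mul_left (2 ^ 2)
  · rw [integral_sin_mul_sq]
    simp only [Function.comp_apply]
    ring

lemma integrable_sq_of_contDiffAt_charFun (h : ContDiffAt ℝ 2 (charFun μ) 0) :
    Integrable (fun x => x ^ 2) μ := by
  obtain ⟨u, -, u_pos, u_tendsto⟩ := exists_seq_strictAnti_tendsto (0 : ℝ)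
  obtain ⟨C, hC⟩ := (isBigO_integral_sin_mul_sq h).bound
  have pointwise (x : ℝ) : Tendsto (fun k => (sin (u k * x) / u k) ^ 2) atTop (𝓝 (x ^ 2)) := by
    have sin_deriv : HasDerivAt (fun t => sin (t * x)) x 0 := by
      simpa using ((hasDerivAt_id (0 : ℝ)).mul_const x).sin
    have u_tendsto_ne : Tendsto u atTop (𝓝[≠] 0) :=
      tendsto_nhdsWithin_iff.2 ⟨u_tendsto, .of_forall fun k => (u_pos k).ne'⟩
    simpa [Function.comp_def, slope_def_field] using
      (sin_deriv.tendsto_slope.comp u_tendsto_ne).pow 2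
  have int (k : ℕ) : Integrable (fun x => (sin (u k * x) / u k) ^ 2) μ := by
    simp only [div_pow]
    refine Integrable.div_const (.of_bound (by fun_prop) 1 (.of_forall fun x => ?_)) _
    simpa [sq_le_one_iff_abs_le_one] using abs_sin_le_one _
  have bounded : ∀ᶠ k in atTop, ∫⁻ x, ‖(sin (u k * x) / u k) ^ 2‖ₑ ∂μ ≤ ENNReal.ofReal C := by
    filter_upwards [u_tendsto.eventually hC] with k hk
    rw [← ofReal_integral_norm_eq_lintegral_enorm (int k)]
    refine ENNReal.ofReal_le_ofReal ?_
    have := u_pos k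
    rw [Real.norm_of_nonneg (integral_nonneg fun x => sq_nonneg _),
      Real.norm_of_nonneg (sq_nonneg _), ← div_le_iff₀ (by positivity), ← integral_div] at hk
    simpa only [norm_pow, norm_div, Real.norm_eq_abs, sq_abs, div_pow] using hk
  exact integrable_of_tendsto (.of_forall pointwise) (fun k => (int k).aestronglyMeasurable)
    (ne_top_of_le_ne_top ENNReal.ofReal_ne_top
      (liminf_le_of_frequently_le' bounded.frequently))

lemma charFun_withDensity_sq (h : Integrable (fun x => x ^ 2) μ) :
    charFun (μ.withDensity fun x => ENNReal.ofReal (x ^ 2)) =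
      fun t => -iteratedDeriv 2 (charFun μ) t := by
  ext t
  have memLp : MemLp id (2 : ℕ) μ := memLp_id_of_integrable_pow two_ne_zero h
  rw [iteratedDeriv_charFun memLp, Complex.I_sq, neg_one_mul, neg_neg, charFun_apply_real,
    integral_withDensity_eq_integral_toReal_smul (by fun_prop) (by simp)]
  refine integral_congr_ae (.of_forall fun x => ?_)
  simp [ENNReal.toReal_ofReal (sq_nonneg x)]

lemma integrable_pow_two_mul_of_contDiffAt_charFun (n : ℕ)
    (h : ContDiffAt ℝ (2 * n : ℕ) (charFun μ) 0) : Integrable (fun x => x ^ (2 * n)) μ := by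
  induction n generalizing μ with
  | zero => simp
  | succ n ih =>
    have sq_int : Integrable (fun x => x ^ 2) μ :=
      integrable_sq_of_contDiffAt_charFun (h.of_le (by norm_cast; lia))
    have := isFiniteMeasure_withDensity_ofReal sq_int.hasFiniteIntegral
    have second_deriv_smooth : ContDiffAt ℝ (2 * n : ℕ) (iteratedDeriv 2 (charFun μ)) 0 := by
      rw [iteratedDeriv_succ, iteratedDeriv_one]
      refine ContDiffAt.derivWithin (n := (2 * n + 1 : ℕ)) (h.derivWithin ?_) ?_ <;> norm_cast
    have moment : Integrable (fun x => x ^ (2 * n))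
        (μ.withDensity fun x => ENNReal.ofReal (x ^ 2)) := by
      apply ih
      rw [charFun_withDensity_sq sq_int]
      exact second_deriv_smooth.neg
    rw [integrable_withDensity_iff_integrable_smul' (by fun_prop) (by simp)] at moment
    refine moment.congr (.of_forall fun x => ?_)
    simp only [ENNReal.toReal_ofReal (sq_nonneg x), smul_eq_mul]
    ring

lemma memLp_id_of_contDiffAt_charFun (h : ContDiffAt ℝ ∞ (charFun μ) 0) (k : ℕ) :
    MemLp id k μ := by
  rcases eq_or_ne k 0 with rfl | hk
  · simpa using aestronglyMeasurable_id
  · have even_moment : Integrable (fun x => x ^ (2 * k)) μ :=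
      integrable_pow_two_mul_of_contDiffAt_charFun k (h.of_le (by exact_mod_cast ENat.LEInfty.out))
    exact (memLp_id_of_integrable_pow (by lia) even_moment).mono_exponent (by norm_cast; lia)

lemma isNegInvariant_of_even_charFun (h : Function.Even (charFun μ)) : μ.IsNegInvariant := by
  refine ⟨?_⟩
  have : IsFiniteMeasure μ.neg := inferInstanceAs (IsFiniteMeasure (μ.map _))
  refine Measure.ext_of_charFun (funext fun t => ?_)
  rw [← h t, ← neg_one_mul, ← charFun_map_mul]
  simp [Measure.neg]

lemma integral_odd_pow_of_even_charFun (h : Function.Even (charFun μ)) {k : ℕ} (hk : Odd k) :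
    ∫ x, x ^ k ∂μ = 0 := by
  have := isNegInvariant_of_even_charFun h
  exact integral_eq_zero_of_odd μ hk.neg_pow

end Moments

lemma iteratedDeriv_succ_id_mul_zero {f : ℝ → ℝ} {m : ℕ} (hf : ContDiffAt ℝ (m + 1 : ℕ) f 0) :
    iteratedDeriv (m + 1) (fun t => t * f t) 0 = (m + 1) * iteratedDeriv m f 0 := by
  rw [iteratedDeriv_fun_mul contDiffAt_fun_id hf, Finset.sum_eq_single 1]
  · simp [iteratedDeriv_one]
  · intro i _ hi
    simp [iteratedDeriv_fun_id_zero, hi]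
  · simp

lemma contDiffAt_comp_add_sq_half {F : ℝ → ℝ} {θ : ℝ} {n : WithTop ℕ∞} (hF : ContDiffAt ℝ n F θ) :
    ContDiffAt ℝ n (fun ξ => F (θ + ξ ^ 2 / 2)) 0 :=
  ContDiffAt.comp (g := F) (f := fun ξ : ℝ => θ + ξ ^ 2 / 2) 0 (by simpa using hF) (by fun_prop)

lemma deriv_comp_add_sq_half_eventuallyEq {F : ℝ → ℝ} {θ : ℝ} (hF : ContDiffAt ℝ 1 F θ) :
    deriv (fun ξ => F (θ + ξ ^ 2 / 2)) =ᶠ[𝓝 0] fun ξ => ξ * deriv F (θ + ξ ^ 2 / 2) := by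
  have inner_tendsto : Tendsto (fun ξ : ℝ => θ + ξ ^ 2 / 2) (𝓝 0) (𝓝 θ) :=
    Continuous.tendsto' (by fun_prop) 0 θ (by simp)
  filter_upwards [inner_tendsto.eventually (hF.eventually (by simp))] with ξ hξ
  have inner_deriv : HasDerivAt (fun ξ : ℝ => θ + ξ ^ 2 / 2) ξ ξ := by
    simpa using ((hasDerivAt_pow 2 ξ).div_const 2).const_add θ
  rw [mul_comm]
  exact ((hξ.differentiableAt one_ne_zero).hasDerivAt.comp ξ inner_deriv).deriv

lemma iteratedDeriv_two_mul_comp_add_sq_half {F : ℝ → ℝ} {θ : ℝ} (hF : ContDiffAt ℝ ∞ F θ)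
    (n : ℕ) : iteratedDeriv (2 * n) (fun ξ => F (θ + ξ ^ 2 / 2)) 0 =
      (2 * n)! / (n ! * 2 ^ n) * iteratedDeriv n F θ := by
  induction n generalizing F with
  | zero => simp
  | succ n ih =>
    have deriv_smooth : ContDiffAt ℝ ∞ (deriv F) θ := hF.derivWithin (by simp)
    calc iteratedDeriv (2 * (n + 1)) (fun ξ => F (θ + ξ ^ 2 / 2)) 0
        = iteratedDeriv (2 * n + 1) (fun ξ => ξ * deriv F (θ + ξ ^ 2 / 2)) 0 := by
          rw [mul_add_one, iteratedDeriv_succ',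
            (deriv_comp_add_sq_half_eventuallyEq (hF.of_le (by simp))).iteratedDeriv_eq]
      _ = ((2 * n : ℕ) + 1) * iteratedDeriv (2 * n) (fun ξ => deriv F (θ + ξ ^ 2 / 2)) 0 :=
          iteratedDeriv_succ_id_mul_zero
            ((contDiffAt_comp_add_sq_half deriv_smooth).of_le (by exact_mod_cast ENat.LEInfty.out))
      _ = (2 * (n + 1))! / ((n + 1)! * 2 ^ (n + 1)) * iteratedDeriv (n + 1) F θ := by
          rw [ih deriv_smooth, ← iteratedDeriv_succ', mul_add_one]
          simp only [Nat.factorial_succ]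
          push_cast
          field_simp
          ring

lemma iteratedDeriv_ofReal_comp {f : ℝ → ℝ} {x : ℝ} {n : ℕ} (hf : ContDiffAt ℝ n f x) :
    iteratedDeriv n (fun t => (f t : ℂ)) x = (iteratedDeriv n f x : ℝ) := by
  have := Complex.ofRealCLM.iteratedFDeriv_comp_left hf (le_refl (n : WithTop ℕ∞))
  simp only [iteratedDeriv]
  exact congrArg (· fun _ => 1) this

section CompSqHalf

variable {ν : Measure ℝ} [IsFiniteMeasure ν] {F : ℝ → ℝ} {θ : ℝ}

lemma memLp_id_of_charFun_eq_comp_add_sq_half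
    (h : ∀ ξ, charFun ν ξ = F (θ + ξ ^ 2 / 2)) (hF : ContDiffAt ℝ ∞ F θ) (k : ℕ) :
    MemLp id k ν := by
  refine memLp_id_of_contDiffAt_charFun ?_ k
  rw [funext h]
  exact Complex.ofRealCLM.contDiff.contDiffAt.comp 0 (contDiffAt_comp_add_sq_half hF)

lemma integral_even_pow_of_charFun_eq_comp_add_sq_half
    (h : ∀ ξ, charFun ν ξ = F (θ + ξ ^ 2 / 2)) (hF : ContDiffAt ℝ ∞ F θ) (n : ℕ) :
    ∫ x, x ^ (2 * n) ∂ν = (-1) ^ n * ((2 * n)! / (n ! * 2 ^ n) * iteratedDeriv n F θ) := by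
  have smooth : ContDiffAt ℝ (2 * n : ℕ) (fun ξ => F (θ + ξ ^ 2 / 2)) 0 :=
    (contDiffAt_comp_add_sq_half hF).of_le (by exact_mod_cast ENat.LEInfty.out)
  have deriv_eq_moment := iteratedDeriv_charFun_zero
    (memLp_id_of_charFun_eq_comp_add_sq_half h hF (2 * n))
  rw [funext h, iteratedDeriv_ofReal_comp smooth, iteratedDeriv_two_mul_comp_add_sq_half hF,
    pow_mul, Complex.I_sq] at deriv_eq_moment
  have moment_eq :
      (2 * n)! / (n ! * 2 ^ n) * iteratedDeriv n F θ = (-1) ^ n * ∫ x, x ^ (2 * n) ∂ν := by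
    rw [← Complex.ofReal_inj, deriv_eq_moment]
    push_cast
    rfl
  rw [moment_eq, ← mul_assoc, ← mul_pow]
  simp

end CompSqHalf

lemma descPochhammer_eval_add {R : Type*} [CommRing R] (a b : R) (m : ℕ) :
    (descPochhammer R m).eval (a + b) = ∑ i ∈ Finset.range (m + 1),
      m.choose i * (descPochhammer R i).eval a * (descPochhammer R (m - i)).eval b := by
  have smeval_eq (k : ℕ) (r : R) :
      (descPochhammer ℤ k).smeval r = (descPochhammer R k).eval r := by
    rw [← descPochhammer_map (Int.castRingHom R), Polynomial.eval_map,
      ← algebraMap_int_eq, ← Polynomial.aeval_def, Polynomial.aeval_eq_smeval]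
  have vandermonde := Ring.descPochhammer_smeval_add m (Commute.all a b)
  simp only [smeval_eq] at vandermonde
  rw [vandermonde, Finset.Nat.sum_antidiagonal_eq_sum_range_succ_mk]
  simp only [mul_assoc]

lemma hasSum_descFactorial_mul_pow_div_factorial (k : ℕ) (z : ℝ) :
    HasSum (fun j : ℕ => (j.descFactorial k : ℝ) * z ^ j / j !) (z ^ k * exp z) := by
  have zero_of_lt : ∀ j ∉ Set.range (· + k), (j.descFactorial k : ℝ) * z ^ j / j ! = 0 := by
    intro j hj
    have : j < k := by
      by_contra! h
      exact hj ⟨j - k, Nat.sub_add_cancel h⟩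
    simp [Nat.descFactorial_eq_zero_iff_lt.2 this]
  rw [← (add_left_injective k).hasSum_iff zero_of_lt]
  have exp_series : HasSum (fun j : ℕ => z ^ j / j !) (exp z) := by
    rw [exp_eq_exp_ℝ]
    exact NormedSpace.expSeries_div_hasSum_exp z
  refine (exp_series.mul_left (z ^ k)).congr_fun fun j => ?_
  have factorial_split : (j ! * (j + k).descFactorial k : ℝ) = (j + k)! := by
    exact_mod_cast Nat.add_sub_cancel j k ▸ Nat.factorial_mul_descFactorial (Nat.le_add_left k j)
  have descFactorial_ne_zero : ((j + k).descFactorial k : ℝ) ≠ 0 := by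
    simp [Nat.descFactorial_eq_zero_iff_lt]
  rw [Function.comp_apply, ← factorial_split, pow_add]
  field_simp

lemma hasSum_descPochhammer_eval_add_mul_pow_div_factorial (m : ℕ) (a z : ℝ) :
    HasSum (fun j : ℕ => (descPochhammer ℝ m).eval (a + j) * z ^ j / j !)
      ((∑ i ∈ Finset.range (m + 1), m.choose i * (descPochhammer ℝ i).eval a * z ^ (m - i)) *
        exp z) := by
  simp only [descPochhammer_eval_add, descPochhammer_eval_eq_descFactorial, Finset.sum_mul,
    Finset.sum_div]
  refine hasSum_sum fun i _ => ?_
  simpa only [mul_assoc, mul_div_assoc] using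
    (hasSum_descFactorial_mul_pow_div_factorial (m - i) z).mul_left
      (m.choose i * (descPochhammer ℝ i).eval a)

lemma iteratedDeriv_rpow_mul_exp_neg {a x : ℝ} (hx : 0 < x) (m : ℕ) :
    iteratedDeriv m (fun w => w ^ a * exp (-w)) x =
      x ^ (a - m) * ∑' j : ℕ, (descPochhammer ℝ m).eval (a + j) * (-x) ^ j / j ! := by
  have iteratedDeriv_exp_neg (k : ℕ) :
      iteratedDeriv k (fun w : ℝ => exp (-w)) x = (-1) ^ k * exp (-x) := by
    simpa using congrFun (iteratedDeriv_exp_const_mul k (-1 : ℝ)) x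
  rw [iteratedDeriv_fun_mul (contDiffAt_rpow_const_of_ne hx.ne') (by fun_prop),
    (hasSum_descPochhammer_eval_add_mul_pow_div_factorial m a (-x)).tsum_eq, Finset.sum_mul,
    Finset.mul_sum]
  refine Finset.sum_congr rfl fun i hi => ?_
  have rpow_split : x ^ (a - i) = x ^ (a - m) * x ^ (m - i) := by
    rw [← rpow_add_natCast hx.ne', Nat.cast_sub (Nat.lt_succ_iff.1 (Finset.mem_range.1 hi))]
    ring_nf
  rw [iteratedDeriv_exp_neg, iteratedDeriv_eq_iterate, iter_deriv_rpow_const, rpow_split, neg_pow]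
  ring

lemma Gamma_div_Gamma_sub_natCast {s : ℝ} (hs : Gamma s ≠ 0) (m : ℕ) :
    Gamma s / Gamma (s - m) = (descPochhammer ℝ m).eval (s - 1) := by
  induction m with
  | zero => simp [hs]
  | succ m ih =>
    rw [descPochhammer_succ_eval, ← ih, Nat.cast_succ, ← sub_sub, sub_right_comm s 1]
    rcases eq_or_ne (s - m - 1) 0 with hpole | hne
    -- At the pole `Gamma` takes the junk value `0`, so the quotient by it is `0` as well.
    · simp [hpole]
    · have recurrence : Gamma (s - m) = (s - m - 1) * Gamma (s - m - 1) := by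
        simpa using Gamma_add_one hne
      rw [recurrence]
      field_simp

lemma Gamma_mul_prabhakar_one {ρ : ℝ} (hρ : 0 < ρ) (m : ℕ) (z : ℝ) :
    Gamma ρ * prabhakar 1 (ρ - m) ρ z =
      ∑' j : ℕ, (descPochhammer ℝ m).eval (ρ - 1 + j) * z ^ j / j ! := by
  rw [prabhakar, ← tsum_mul_left]
  refine tsum_congr fun j => ?_
  have hj : Gamma (ρ + j) ≠ 0 := (Gamma_pos_of_pos (by positivity)).ne'
  rw [sub_add_eq_add_sub, ← Gamma_div_Gamma_sub_natCast hj, one_mul, ← add_sub_assoc,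
    add_comm (j : ℝ)]
  field_simp [(Gamma_pos_of_pos hρ).ne']

lemma hasDerivAt_integral_Ioi {E : Type*} [NormedAddCommGroup E] [NormedSpace ℝ E]
    [CompleteSpace E] {f : ℝ → E} {a x : ℝ} (hf : IntegrableOn f (Ioi a)) (hax : a < x)
    (hc : ContinuousAt f x) :
    HasDerivAt (fun u => ∫ w in Ioi u, f w) (-f x) x := by
  have integral_eq (u : ℝ) (hu : a < u) :
      ∫ w in Ioi u, f w = (∫ w in Ioi a, f w) - ∫ w in a..u, f w := by
    rw [← intervalIntegral.integral_Ioi_sub_Ioi hf hu.le, sub_sub_cancel]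
  have meas : StronglyMeasurableAtFilter f (𝓝 x) :=
    ⟨Ioi a, Ioi_mem_nhds hax, hf.aestronglyMeasurable⟩
  have ftc := (intervalIntegral.integral_hasDerivAt_right
    ((intervalIntegrable_iff_integrableOn_Ioc_of_le hax.le).2
      (hf.mono_set Ioc_subset_Ioi_self)) meas hc).const_sub (∫ w in Ioi a, f w)
  exact ftc.congr_of_eventuallyEq ((eventually_gt_nhds hax).mono integral_eq)

lemma hasDerivAt_uGamma (ρ : ℝ) {x : ℝ} (hx : 0 < x) :
    HasDerivAt (uGamma ρ) (-(x ^ (ρ - 1) * exp (-x))) x := by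
  have cont : ContinuousOn (fun w : ℝ => exp (-w) * w ^ (ρ - 1)) (Ioi 0) := by
    refine ContinuousOn.mul (by fun_prop) fun w hw => ?_
    exact (continuousAt_rpow_const _ _ (Or.inl (ne_of_gt hw))).continuousWithinAt
  have int : IntegrableOn (fun w : ℝ => exp (-w) * w ^ (ρ - 1)) (Ioi (x / 2)) :=
    integrable_of_isBigO_exp_neg one_half_pos
      (cont.mono (Ici_subset_Ioi.2 (half_pos hx))) (Gamma_integrand_isLittleO _).isBigO
  rw [mul_comm]
  exact hasDerivAt_integral_Ioi int (half_lt_self hx) (cont.continuousAt (Ioi_mem_nhds hx))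

lemma deriv_uGamma_eventuallyEq (ρ : ℝ) {x : ℝ} (hx : 0 < x) :
    deriv (uGamma ρ) =ᶠ[𝓝 x] fun w => -(w ^ (ρ - 1) * exp (-w)) :=
  (eventually_gt_nhds hx).mono fun _ hw => (hasDerivAt_uGamma ρ hw).deriv

lemma contDiffAt_uGamma (ρ : ℝ) {x : ℝ} (hx : 0 < x) : ContDiffAt ℝ ∞ (uGamma ρ) x := by
  have deriv_smooth : ContDiffOn ℝ ∞ (deriv (uGamma ρ)) (Ioi 0) := fun w hw =>
    (((contDiffAt_rpow_const_of_ne (ne_of_gt hw)).mul (by fun_prop)).neg.congr_of_eventuallyEq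
      (deriv_uGamma_eventuallyEq ρ hw)).contDiffWithinAt
  exact ((contDiffOn_infty_iff_deriv_of_isOpen isOpen_Ioi).2
    ⟨fun w hw => (hasDerivAt_uGamma ρ hw).differentiableAt.differentiableWithinAt,
      deriv_smooth⟩).contDiffAt (Ioi_mem_nhds hx)

lemma iteratedDeriv_uGamma {ρ x : ℝ} (hρ : 0 < ρ) (hx : 0 < x) {n : ℕ} (hn : n ≠ 0) :
    iteratedDeriv n (uGamma ρ) x =
      -(x ^ (ρ - n) * (Gamma ρ * prabhakar 1 (ρ + 1 - n) ρ (-x))) := by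
  obtain ⟨m, rfl⟩ := Nat.exists_eq_succ_of_ne_zero hn
  have exponent : ρ - (m + 1 : ℕ) = ρ - 1 - m := by push_cast; ring
  have parameter : ρ + 1 - (m + 1 : ℕ) = ρ - m := by push_cast; ring
  rw [iteratedDeriv_succ', (deriv_uGamma_eventuallyEq ρ hx).iteratedDeriv_eq,
    iteratedDeriv_fun_neg, iteratedDeriv_rpow_mul_exp_neg hx, exponent, parameter,
    Gamma_mul_prabhakar_one hρ]

theorem stmt_4 (ρ θ : ℝ) (hρ : ρ ∈ Set.Ioc (0 : ℝ) 1) (hθ : 0 < θ)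
    (ν : Measure ℝ) [IsProbabilityMeasure ν]
    (hchar : ∀ ξ : ℝ, ∫ x, Complex.exp (Complex.I * ((ξ * x : ℝ) : ℂ)) ∂ν
        = ((uGamma ρ (θ + ξ ^ 2 / 2) / uGamma ρ θ : ℝ) : ℂ)) :
    (∀ k : ℕ, Integrable (fun x : ℝ => |x| ^ k) ν) ∧
    (∀ n : ℕ, ∫ x, x ^ (2 * n + 1) ∂ν = 0) ∧
    (∀ n : ℕ, 1 ≤ n → ∫ x, x ^ (2 * n) ∂ν
        = (-1 : ℝ) ^ (n + 1) * ((2 * n).factorial : ℝ) * Real.Gamma ρ * θ ^ (ρ - (n : ℝ))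
            * prabhakar 1 (ρ + 1 - n) ρ (-θ)
            / ((n.factorial : ℝ) * 2 ^ n * uGamma ρ θ)) := by
  set F : ℝ → ℝ := fun x => uGamma ρ x / uGamma ρ θ
  have F_smooth : ContDiffAt ℝ ∞ F θ := (contDiffAt_uGamma ρ hθ).div_const _
  have charFun_eq (ξ : ℝ) : charFun ν ξ = F (θ + ξ ^ 2 / 2) := by
    rw [← hchar ξ, charFun_apply_real]
    simp only [Complex.ofReal_mul, mul_comm Complex.I]
  have charFun_even : Function.Even (charFun ν) := fun ξ => by simp only [charFun_eq, neg_sq]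
  refine ⟨fun k => ?_, fun n => ?_, fun n hn => ?_⟩
  · exact (memLp_id_of_charFun_eq_comp_add_sq_half charFun_eq F_smooth k).integrable_norm_pow'
  · exact integral_odd_pow_of_even_charFun charFun_even (odd_two_mul_add_one n)
  · rw [integral_even_pow_of_charFun_eq_comp_add_sq_half charFun_eq F_smooth,
      iteratedDeriv_div_const, iteratedDeriv_uGamma hρ.1 hθ (by lia)]
    ring
end
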